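/- Let n ≥ 1 and k ≥ 1 be integers. The set C̃ is a convex body in M containing the origin in its interior, and its gauge (Minkowski functional) G_C satisfies G_C(f) = |min_{v ∈ S^{n-1}} f(v)| for every f ∈ M. -/

import Mathlib

/-!
A form `f ∈ M` lies in `C̃` iff `f ≥ -1` on the unit sphere, by homogeneity, so `C̃` is an
intersection of closed half-spaces `{f : f(v) ≥ -1}` with `v` on the sphere; in particular it is
closed and convex. On the finite-dimensional space `M` there is a constant `c` with
`sup |f| ≤ c ‖f‖₂`, where the supremum is over the sphere, so `C̃` contains a ball around `0`.
For boundedness, `f ∈ C̃` satisfies `∫ |f| ≤ ∫ (f + 1) + 1 = 2` because `f` has mean zero, whence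
`‖f‖₂² = ∫ f² ≤ sup |f| ∫ |f| ≤ 2 c ‖f‖₂`.

Let `m = min f` over the sphere. For `r > 0`, `f ∈ r C̃` iff `-r ≤ m`. As `f` has mean zero, `m ≤ 0`,
so the condition is `|m| ≤ r`, and the infimum of these `r` is `|m|`.
-/


open MeasureTheory MvPolynomial
open scoped ENNReal RealInnerProductSpace

noncomputable section

/-- Evaluation of a multivariate polynomial at a point of Euclidean space `ℝⁿ`. -/
def peval {n : ℕ} (p : MvPolynomial (Fin n) ℝ) (x : EuclideanSpace ℝ (Fin n)) : ℝ :=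
  MvPolynomial.eval (fun i => x i) p

/-- The `L²(σ)` inner product `⟨f,g⟩ = ∫ f·g dσ` on polynomials. -/
def pinner {n : ℕ} (σ : Measure (EuclideanSpace ℝ (Fin n)))
    (f g : MvPolynomial (Fin n) ℝ) : ℝ :=
  ∫ x, peval f x * peval g x ∂σ

/-- `μ` is a rotation-invariant probability measure concentrated on the unit sphere. -/
def IsRotInvSphereProb {E : Type*} [NormedAddCommGroup E] [NormedSpace ℝ E]
    [MeasurableSpace E] (μ : Measure E) : Prop :=
  IsProbabilityMeasure μ ∧ μ (Metric.sphere (0 : E) 1)ᶜ = 0 ∧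
    ∀ T : E ≃ₗᵢ[ℝ] E, Measure.map T μ = μ

/-- The hyperplane `M` of forms of degree `2k` with integral `0` on the sphere. -/
def Mset (n k : ℕ) (σ : Measure (EuclideanSpace ℝ (Fin n))) :
    Set (MvPolynomial (Fin n) ℝ) :=
  {f | f.IsHomogeneous (2 * k) ∧ ∫ x, peval f x ∂σ = 0}

/-- The form `r^{2k} = (x₁² + ⋯ + xₙ²)^k`. -/
def rSq (n k : ℕ) : MvPolynomial (Fin n) ℝ :=
  (∑ i : Fin n, X i ^ 2) ^ k

/-- The cone `C` of nonnegative forms of degree `2k`. -/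
def Cset (n k : ℕ) : Set (MvPolynomial (Fin n) ℝ) :=
  {f | f.IsHomogeneous (2 * k) ∧ ∀ x : EuclideanSpace ℝ (Fin n), 0 ≤ peval f x}

/-- The cone `Sq` of sums of squares of forms of degree `k`. -/
def Sqset (n k : ℕ) : Set (MvPolynomial (Fin n) ℝ) :=
  {f | ∃ (m : ℕ) (g : Fin m → MvPolynomial (Fin n) ℝ),
    (∀ i, (g i).IsHomogeneous k) ∧ f = ∑ i, g i ^ 2}

/-- The compact base `C̃ = {f ∈ M : f + r^{2k} ∈ C}`. -/
def Ctilde (n k : ℕ) (σ : Measure (EuclideanSpace ℝ (Fin n))) :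
    Set (MvPolynomial (Fin n) ℝ) :=
  {f ∈ Mset n k σ | f + rSq n k ∈ Cset n k}

/-- The compact base `S̃q = {f ∈ M : f + r^{2k} ∈ Sq}`. -/
def Sqtilde (n k : ℕ) (σ : Measure (EuclideanSpace ℝ (Fin n))) :
    Set (MvPolynomial (Fin n) ℝ) :=
  {f ∈ Mset n k σ | f + rSq n k ∈ Sqset n k}

/-- `φ` is a linear isometry (w.r.t. the `L²(σ)` inner product) identifying Euclidean
`D`-space with the hyperplane `M`; in particular `D = D_M = dim M`. -/
def IsCoordOfM (n k D : ℕ) (σ : Measure (EuclideanSpace ℝ (Fin n)))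
    (φ : EuclideanSpace ℝ (Fin D) →ₗ[ℝ] MvPolynomial (Fin n) ℝ) : Prop :=
  Function.Injective φ ∧ Set.range φ = Mset n k σ ∧
    ∀ y z : EuclideanSpace ℝ (Fin D), pinner σ (φ y) (φ z) = ⟪y, z⟫

/-- The `L^∞` norm of a polynomial on the unit sphere `S^{n-1}`. -/
def supNorm {n : ℕ} (f : MvPolynomial (Fin n) ℝ) : ℝ :=
  sSup ((fun x => |peval f x|) '' Metric.sphere (0 : EuclideanSpace ℝ (Fin n)) 1)

/-- The norm `‖f‖_sq = max {|⟨f, g²⟩| : g ∈ P_{n,k}, ⟨g,g⟩ = 1}`. -/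
def sqNorm {n : ℕ} (k : ℕ) (σ : Measure (EuclideanSpace ℝ (Fin n)))
    (f : MvPolynomial (Fin n) ℝ) : ℝ :=
  sSup ((fun g => |pinner σ f (g ^ 2)|) ''
    {g : MvPolynomial (Fin n) ℝ | g.IsHomogeneous k ∧ pinner σ g g = 1})

lemma continuous_peval {n : ℕ} (p : MvPolynomial (Fin n) ℝ) : Continuous (peval p) := by
  unfold peval
  exact (MvPolynomial.continuous_eval p).comp (by fun_prop)

lemma peval_add {n : ℕ} (p q : MvPolynomial (Fin n) ℝ) (x : EuclideanSpace ℝ (Fin n)) :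
    peval (p + q) x = peval p x + peval q x := by
  simp [peval]

lemma peval_smul {n : ℕ} (a : ℝ) (p : MvPolynomial (Fin n) ℝ) (x : EuclideanSpace ℝ (Fin n)) :
    peval (a • p) x = a * peval p x := by
  simp [peval, MvPolynomial.smul_eval]

lemma peval_rSq (n k : ℕ) (x : EuclideanSpace ℝ (Fin n)) :
    peval (rSq n k) x = (‖x‖ ^ 2) ^ k := by
  simp [peval, rSq, EuclideanSpace.real_norm_sq_eq]

lemma isHomogeneous_rSq (n k : ℕ) : (rSq n k).IsHomogeneous (2 * k) := by
  unfold rSq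
  exact (MvPolynomial.IsHomogeneous.sum _ _ _
    fun i _ => by simpa using (MvPolynomial.isHomogeneous_X ℝ i).pow 2).pow k

lemma peval_homogeneous {n d : ℕ} {p : MvPolynomial (Fin n) ℝ} (hp : p.IsHomogeneous d)
    (a : ℝ) (x : EuclideanSpace ℝ (Fin n)) : peval p (a • x) = a ^ d * peval p x := by
  unfold peval
  rw [MvPolynomial.eval_eq, MvPolynomial.eval_eq, Finset.mul_sum]
  refine Finset.sum_congr rfl fun m hm => ?_
  have hd : ∑ i ∈ m.support, m i = d := by
    have := hp (MvPolynomial.mem_support_iff.mp hm)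
    simpa [Finsupp.weight_apply, Finsupp.sum] using this
  simp only [PiLp.smul_apply, smul_eq_mul, mul_pow, Finset.prod_mul_distrib]
  rw [Finset.prod_pow_eq_pow_sum, hd]
  ring

/-- Membership in `C̃` is the family of inequalities `f(v) ≥ -1` over the unit sphere. -/
lemma mem_Ctilde_iff {n k : ℕ} (hk : 1 ≤ k) {σ : Measure (EuclideanSpace ℝ (Fin n))}
    {f : MvPolynomial (Fin n) ℝ} (hf : f ∈ Mset n k σ) :
    f ∈ Ctilde n k σ ↔
      ∀ x ∈ Metric.sphere (0 : EuclideanSpace ℝ (Fin n)) 1, -1 ≤ peval f x := by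
  constructor
  · intro h x hx
    have h1 := h.2.2 x
    rw [mem_sphere_zero_iff_norm] at hx
    rw [peval_add, peval_rSq, hx] at h1
    simp only [one_pow] at h1
    linarith
  · intro h
    have hh : (f + rSq n k).IsHomogeneous (2 * k) := hf.1.add (isHomogeneous_rSq n k)
    refine ⟨hf, hh, fun x => ?_⟩
    by_cases hx : x = 0
    · have h0 := peval_homogeneous hh 0 x
      rw [zero_smul, zero_pow (by omega), zero_mul] at h0
      rw [hx, h0]
    · have hn : ‖x‖ ≠ 0 := norm_ne_zero_iff.mpr hx
      have hs : ‖‖x‖⁻¹ • x‖ = 1 := by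
        rw [norm_smul, norm_inv, norm_norm, inv_mul_cancel₀ hn]
      have h1 := h (‖x‖⁻¹ • x) (mem_sphere_zero_iff_norm.mpr hs)
      have h2 := peval_homogeneous hh ‖x‖ (‖x‖⁻¹ • x)
      rw [smul_inv_smul₀ hn, peval_add _ _ (‖x‖⁻¹ • x), peval_rSq, hs] at h2
      rw [h2]
      simp only [one_pow]
      exact mul_nonneg (by positivity) (by linarith)

lemma ae_mem_sphere {n : ℕ} {σ : Measure (EuclideanSpace ℝ (Fin n))}
    (hσ : IsRotInvSphereProb σ) :
    ∀ᵐ x ∂σ, x ∈ Metric.sphere (0 : EuclideanSpace ℝ (Fin n)) 1 :=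
  hσ.2.1

lemma integrable_of_continuous {n : ℕ} {σ : Measure (EuclideanSpace ℝ (Fin n))}
    (hσ : IsRotInvSphereProb σ) {g : EuclideanSpace ℝ (Fin n) → ℝ} (hg : Continuous g) :
    Integrable g σ := by
  have := hσ.1
  obtain ⟨c, hc⟩ := (isCompact_sphere (0 : EuclideanSpace ℝ (Fin n)) 1).exists_bound_of_continuousOn
    hg.continuousOn
  refine Integrable.of_bound hg.aestronglyMeasurable c ?_
  filter_upwards [ae_mem_sphere hσ] with x hx using hc x hx

/-- On a linear image of a Euclidean space, the sup norm over the sphere is controlled by the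
Euclidean norm of the coordinates. -/
lemma exists_sup_bound {n D : ℕ} (φ : EuclideanSpace ℝ (Fin D) →ₗ[ℝ] MvPolynomial (Fin n) ℝ) :
    ∃ c : ℝ, 0 < c ∧ ∀ y, ∀ x ∈ Metric.sphere (0 : EuclideanSpace ℝ (Fin n)) 1,
      |peval (φ y) x| ≤ c * ‖y‖ := by
  have h1 : ∀ i : Fin D, ∃ c : ℝ, ∀ x ∈ Metric.sphere (0 : EuclideanSpace ℝ (Fin n)) 1,
      ‖peval (φ (EuclideanSpace.single i 1)) x‖ ≤ c := fun i =>
    (isCompact_sphere _ _).exists_bound_of_continuousOn (continuous_peval _).continuousOn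
  choose c hc using h1
  refine ⟨1 + ∑ i, |c i|, by positivity, fun y x hx => ?_⟩
  have hy : y = ∑ i, y i • EuclideanSpace.single i (1 : ℝ) := by
    ext j
    simp [Finset.sum_apply, Pi.single_apply]
  have hp : peval (φ y) x = ∑ i, y i * peval (φ (EuclideanSpace.single i 1)) x := by
    conv_lhs => rw [hy]
    simp [peval, map_sum, MvPolynomial.smul_eval]
  rw [hp]
  calc |∑ i, y i * peval (φ (EuclideanSpace.single i 1)) x|
      ≤ ∑ i, |y i * peval (φ (EuclideanSpace.single i 1)) x| := Finset.abs_sum_le_sum_abs _ _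
    _ ≤ ∑ i, |c i| * ‖y‖ := by
        refine Finset.sum_le_sum fun i _ => ?_
        rw [abs_mul, mul_comm]
        exact mul_le_mul ((hc i x hx).trans (le_abs_self _)) (PiLp.norm_apply_le y i)
          (abs_nonneg _) (abs_nonneg _)
    _ ≤ (1 + ∑ i, |c i|) * ‖y‖ := by
        rw [← Finset.sum_mul]
        exact mul_le_mul_of_nonneg_right (by linarith) (norm_nonneg y)

/-- C̃ is a convex body in M with the origin in its interior, and its gauge is
given by the absolute value of the minimum on the unit sphere. -/
theorem ctilde_convex_body_and_gauge
    (n k D : ℕ) (hn : 1 ≤ n) (hk : 1 ≤ k)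
    (σ : Measure (EuclideanSpace ℝ (Fin n))) (hσ : IsRotInvSphereProb σ)
    (φ : EuclideanSpace ℝ (Fin D) →ₗ[ℝ] MvPolynomial (Fin n) ℝ)
    (hφ : IsCoordOfM n k D σ φ) :
    Convex ℝ (φ ⁻¹' Ctilde n k σ) ∧ IsCompact (φ ⁻¹' Ctilde n k σ) ∧
      (0 : EuclideanSpace ℝ (Fin D)) ∈ interior (φ ⁻¹' Ctilde n k σ) ∧
      ∀ y : EuclideanSpace ℝ (Fin D),
        gauge (φ ⁻¹' Ctilde n k σ) y =
          |sInf (peval (φ y) '' Metric.sphere (0 : EuclideanSpace ℝ (Fin n)) 1)| := by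
  have := hσ.1
  have : Nonempty (Fin n) := ⟨⟨0, hn⟩⟩
  obtain ⟨-, hrange, hinner⟩ := hφ
  have hM : ∀ y, φ y ∈ Mset n k σ := fun y => hrange ▸ Set.mem_range_self y
  have hK : ∀ y, y ∈ φ ⁻¹' Ctilde n k σ ↔
      ∀ x ∈ Metric.sphere (0 : EuclideanSpace ℝ (Fin n)) 1, -1 ≤ peval (φ y) x :=
    fun y => mem_Ctilde_iff hk (hM y)
  have hint : ∀ y, Integrable (peval (φ y)) σ := fun y =>
    integrable_of_continuous hσ (continuous_peval _)
  obtain ⟨c, hc0, hc⟩ := exists_sup_bound φ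
  have hnorm : ∀ y ∈ φ ⁻¹' Ctilde n k σ, ‖y‖ ≤ 2 * c := by
    intro y hy
    rw [hK] at hy
    have hle : ∫ x, peval (φ y) x * peval (φ y) x ∂σ
        ≤ ∫ x, (c * ‖y‖) * (peval (φ y) x + 2) ∂σ := by
      refine integral_mono_ae
        (integrable_of_continuous hσ ((continuous_peval _).mul (continuous_peval _)))
        (((hint y).add (integrable_const 2)).const_mul _) ?_
      filter_upwards [ae_mem_sphere hσ] with x hx
      have h1 := hy x hx
      have h2 := hc y x hx
      have h3 : |peval (φ y) x| ≤ peval (φ y) x + 2 := abs_le.mpr ⟨by linarith, by linarith⟩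
      calc peval (φ y) x * peval (φ y) x = |peval (φ y) x| * |peval (φ y) x| :=
            (abs_mul_abs_self _).symm
        _ ≤ (c * ‖y‖) * (peval (φ y) x + 2) :=
            mul_le_mul h2 h3 (abs_nonneg _) (by positivity)
    have hin := hinner y y
    rw [pinner, real_inner_self_eq_norm_sq] at hin
    rw [hin, integral_const_mul, integral_add (hint y) (integrable_const 2), (hM y).2] at hle
    simp only [integral_const, probReal_univ, smul_eq_mul, one_mul, zero_add] at hle
    by_contra hcon
    push Not at hcon
    nlinarith
  have hclosed : IsClosed (φ ⁻¹' Ctilde n k σ) := by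
    have heq : φ ⁻¹' Ctilde n k σ = ⋂ x ∈ Metric.sphere (0 : EuclideanSpace ℝ (Fin n)) 1,
        {y | -1 ≤ peval (φ y) x} := by
      ext y
      rw [hK]
      simp only [Set.mem_iInter, Set.mem_ofPred_eq]
    rw [heq]
    refine isClosed_biInter fun x _ => isClosed_le continuous_const ?_
    let L : EuclideanSpace ℝ (Fin D) →ₗ[ℝ] ℝ :=
      { toFun := fun y => peval (φ y) x
        map_add' := fun y z => by rw [map_add, peval_add]
        map_smul' := fun a y => by rw [map_smul, peval_smul]; rfl }
    exact L.continuous_of_finiteDimensional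
  refine ⟨?_, ?_, ?_, ?_⟩
  · intro y hy z hz a b ha hb hab
    rw [hK] at hy hz ⊢
    intro x hx
    rw [map_add, map_smul, map_smul, peval_add, peval_smul, peval_smul]
    have h1 := mul_le_mul_of_nonneg_left (hy x hx) ha
    have h2 := mul_le_mul_of_nonneg_left (hz x hx) hb
    linarith
  · exact Metric.isCompact_of_isClosed_isBounded hclosed
      (isBounded_iff_forall_norm_le.mpr ⟨2 * c, hnorm⟩)
  · rw [mem_interior_iff_mem_nhds]
    refine Filter.mem_of_superset (Metric.ball_mem_nhds 0 (inv_pos.mpr hc0)) fun y hy => ?_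
    rw [hK]
    intro x hx
    rw [mem_ball_zero_iff] at hy
    have h1 : c * ‖y‖ ≤ 1 := by
      calc c * ‖y‖ ≤ c * c⁻¹ := mul_le_mul_of_nonneg_left hy.le hc0.le
        _ = 1 := mul_inv_cancel₀ hc0.ne'
    have h2 := neg_le_of_abs_le (hc y x hx)
    linarith
  · intro y
    set m := sInf (peval (φ y) '' Metric.sphere (0 : EuclideanSpace ℝ (Fin n)) 1) with hm
    have hne : (peval (φ y) '' Metric.sphere (0 : EuclideanSpace ℝ (Fin n)) 1).Nonempty :=
      (NormedSpace.sphere_nonempty.mpr zero_le_one).image _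
    have hbdd : BddBelow (peval (φ y) '' Metric.sphere (0 : EuclideanSpace ℝ (Fin n)) 1) :=
      ((isCompact_sphere _ _).image (continuous_peval _)).bddBelow
    have hm_iff : ∀ t : ℝ, t ≤ m ↔
        ∀ x ∈ Metric.sphere (0 : EuclideanSpace ℝ (Fin n)) 1, t ≤ peval (φ y) x := by
      intro t
      rw [hm, le_csInf_iff hbdd hne, Set.forall_mem_image]
    have hm0 : m ≤ 0 := by
      have h1 : ∫ _, m ∂σ ≤ ∫ x, peval (φ y) x ∂σ := by
        refine integral_mono_ae (integrable_const m) (hint y) ?_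
        filter_upwards [ae_mem_sphere hσ] with x hx using (hm_iff m).1 le_rfl x hx
      rw [(hM y).2] at h1
      simpa using h1
    open scoped Pointwise in
    have hmem : ∀ r : ℝ, 0 < r → (y ∈ r • (φ ⁻¹' Ctilde n k σ) ↔ |m| ≤ r) := by
      intro r hr
      rw [Set.mem_smul_set_iff_inv_smul_mem₀ hr.ne', hK, abs_of_nonpos hm0, neg_le, hm_iff]
      refine forall₂_congr fun x _ => ?_
      rw [map_smul, peval_smul, inv_mul_eq_div, le_div_iff₀ hr, neg_one_mul]
    refine le_antisymm (le_of_forall_pos_le_add fun ε hε => ?_) ?_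
    · have hr : 0 < |m| + ε := by positivity
      exact gauge_le_of_mem hr.le ((hmem _ hr).2 (by linarith))
    · -- `gauge` is an infimum over a set that must be nonempty to avoid the junk value `0`.
      rw [gauge_def]
      refine le_csInf ⟨|m| + 1, ?_⟩ ?_
      · have hr : 0 < |m| + 1 := by positivity
        exact ⟨hr, (hmem _ hr).2 (by linarith)⟩
      · rintro r ⟨hr, hyr⟩
        exact (hmem r hr).1 hyr

end
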